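/- arXiv:2007.12225 — 2 statements merged into one kernel-verified Lean document; each statement's English description precedes it below -/
import Mathlib

section
/- (Appendix A, concluding chain) Let W be a channel from 𝒳 to 𝒴, let Q_X be a pmf on 𝒳, let R ≥ 0, and let Q_{XX'} be a pmf on 𝒳 × 𝒳. Define Ξ(Q_{XX'},R) = sup_{ρ ≥ 0} min over conditional pmfs Q_{Y|XX'} of { −∑_{x,x',y} Q_{XX'Y}(x,x',y) log W(y|x) − H_Q(Y|X,X') + ρ ( a_{g_ML}(R,Q_Y) − ∑_{x',y} Q_{X'Y}(x',y) log W(y|x') ) }, where Q_{XX'Y} = Q_{XX'} · Q_{Y|XX'} and Q_Y, Q_{X'Y} are its marginals. Then Ξ(Q_{XX'},R) ≤ Θ(Q_{XX'},R). -/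
open Real BigOperators Filter

namespace EE

variable {𝒳 𝒴 : Type*} [Fintype 𝒳] [Fintype 𝒴]

/-- `p` is a probability mass function on a finite type. -/
def IsPMF {α : Type*} [Fintype α] (p : α → ℝ) : Prop :=
  (∀ a, 0 ≤ p a) ∧ ∑ a, p a = 1

/-- `p` is a strictly positive probability mass function on a finite type. -/
def IsPosPMF {α : Type*} [Fintype α] (p : α → ℝ) : Prop :=
  (∀ a, 0 < p a) ∧ ∑ a, p a = 1

/-- A channel from `𝒳` to `𝒴`: every row `W (·|x)` is a strictly positive pmf on `𝒴`. -/
def IsChannel (W : 𝒳 → 𝒴 → ℝ) : Prop := ∀ x, IsPosPMF (W x)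

/-- A joint pmf on `𝒳 × 𝒴`, in curried form. -/
def IsJointPMF (Q : 𝒳 → 𝒴 → ℝ) : Prop :=
  (∀ x y, 0 ≤ Q x y) ∧ ∑ x, ∑ y, Q x y = 1

/-- A joint pmf on `𝒳 × 𝒳 × 𝒴`, in curried form. -/
def IsJointPMF3 (Q : 𝒳 → 𝒳 → 𝒴 → ℝ) : Prop :=
  (∀ x x' y, 0 ≤ Q x x' y) ∧ ∑ x, ∑ x', ∑ y, Q x x' y = 1

/-- `𝒳`-marginal of a joint pmf. -/
def margX (Q : 𝒳 → 𝒴 → ℝ) : 𝒳 → ℝ := fun x => ∑ y, Q x y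

/-- `𝒴`-marginal of a joint pmf. -/
def margY (Q : 𝒳 → 𝒴 → ℝ) : 𝒴 → ℝ := fun y => ∑ x, Q x y

/-- Shannon entropy (natural logarithm, with the convention `0 log 0 = 0`,
which holds automatically since `Real.log 0 = 0`). -/
noncomputable def ent {α : Type*} [Fintype α] (p : α → ℝ) : ℝ :=
  -∑ a, p a * Real.log (p a)

/-- Mutual information `I_Q(X;Y)` of a joint pmf `Q` on `𝒳 × 𝒴`. -/
noncomputable def mutInf (Q : 𝒳 → 𝒴 → ℝ) : ℝ :=
  ∑ x, ∑ y, Q x y * Real.log (Q x y / (margX Q x * margY Q y))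

/-- Conditional entropy `H_Q(Y|X)` of a joint pmf `Q` on `𝒳 × 𝒴`. -/
noncomputable def condEntYX (Q : 𝒳 → 𝒴 → ℝ) : ℝ :=
  -∑ x, ∑ y, Q x y * Real.log (Q x y / margX Q x)

/-- Conditional entropy `H_Q(X|Y)` of a joint pmf `Q` on `𝒳 × 𝒴`. -/
noncomputable def condEntXY (Q : 𝒳 → 𝒴 → ℝ) : ℝ :=
  -∑ x, ∑ y, Q x y * Real.log (Q x y / margY Q y)

/-- The maximum-likelihood decoding metric `g_ML(Q) = ∑ Q(x,y) log W(y|x)`. -/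
noncomputable def gML (W : 𝒳 → 𝒴 → ℝ) (Q : 𝒳 → 𝒴 → ℝ) : ℝ :=
  ∑ x, ∑ y, Q x y * Real.log (W x y)

/-- The maximum mutual information decoding metric `g_MMI(Q) = I_Q(X;Y)`. -/
noncomputable def gMMI (Q : 𝒳 → 𝒴 → ℝ) : ℝ := mutInf Q

/-- The quantity `a_g(R, Q_Y)`: the maximum of `g(Q_{X̃Y})` over joint pmfs with
`𝒳`-marginal `Q_X`, `𝒴`-marginal `Q_Y` and `I_Q(X̃;Y) ≤ R`. -/
noncomputable def aFun (g : (𝒳 → 𝒴 → ℝ) → ℝ) (QX : 𝒳 → ℝ) (R : ℝ) (QY : 𝒴 → ℝ) : ℝ :=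
  sSup {v : ℝ | ∃ Q : 𝒳 → 𝒴 → ℝ, IsJointPMF Q ∧ margX Q = QX ∧ margY Q = QY ∧
    mutInf Q ≤ R ∧ v = g Q}

/-- Joint pmf on `𝒳 × 𝒳 × 𝒴` built from `Q_{XX'}` and a conditional pmf `Q_{Y|XX'}`. -/
def jointQ (QXX' : 𝒳 → 𝒳 → ℝ) (Qc : 𝒳 → 𝒳 → 𝒴 → ℝ) : 𝒳 → 𝒳 → 𝒴 → ℝ :=
  fun x x' y => QXX' x x' * Qc x x' y

/-- Marginal `Q_{XY}` of a joint pmf on `𝒳 × 𝒳 × 𝒴`. -/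
def margXY3 (Q : 𝒳 → 𝒳 → 𝒴 → ℝ) : 𝒳 → 𝒴 → ℝ := fun x y => ∑ x', Q x x' y

/-- Marginal `Q_{X'Y}` of a joint pmf on `𝒳 × 𝒳 × 𝒴`. -/
def margX'Y3 (Q : 𝒳 → 𝒳 → 𝒴 → ℝ) : 𝒳 → 𝒴 → ℝ := fun x' y => ∑ x, Q x x' y

/-- Marginal `Q_Y` of a joint pmf on `𝒳 × 𝒳 × 𝒴`. -/
def margY3 (Q : 𝒳 → 𝒳 → 𝒴 → ℝ) : 𝒴 → ℝ := fun y => ∑ x, ∑ x', Q x x' y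

/-- Conditional entropy `H_Q(Y|X,X')` of a joint pmf on `𝒳 × 𝒳 × 𝒴`. -/
noncomputable def condEntY3 (Q : 𝒳 → 𝒳 → 𝒴 → ℝ) : ℝ :=
  -∑ x, ∑ x', ∑ y, Q x x' y * Real.log (Q x x' y / ∑ y', Q x x' y')

/-- The objective `−E_Q[log W(Y|X)] − H_Q(Y|X,X')`. -/
noncomputable def obj (W : 𝒳 → 𝒴 → ℝ) (Q : 𝒳 → 𝒳 → 𝒴 → ℝ) : ℝ :=
  (-∑ x, ∑ x', ∑ y, Q x x' y * Real.log (W x y)) - condEntY3 Q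

/-- `Γ_g(Q_{XX'}, R)`: the infimum of `−E_Q[log W(Y|X)] − H_Q(Y|X,X')` over conditional
pmfs `Q_{Y|XX'}` satisfying `g(Q_{X'Y}) ≥ max (g(Q_{XY})) (a_g(R,Q_Y))`, as an
extended real, with `inf ∅ = +∞`. -/
noncomputable def Gamma (W : 𝒳 → 𝒴 → ℝ) (g : (𝒳 → 𝒴 → ℝ) → ℝ) (QX : 𝒳 → ℝ)
    (R : ℝ) (QXX' : 𝒳 → 𝒳 → ℝ) : EReal :=
  sInf {v : EReal | ∃ Qc : 𝒳 → 𝒳 → 𝒴 → ℝ, (∀ x x', IsPMF (Qc x x')) ∧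
    max (g (margXY3 (jointQ QXX' Qc))) (aFun g QX R (margY3 (jointQ QXX' Qc)))
      ≤ g (margX'Y3 (jointQ QXX' Qc)) ∧
    v = ((obj W (jointQ QXX' Qc) : ℝ) : EReal)}

/-- The single-letter TRC exponent `E_trc^g(R, Q_X)`. -/
noncomputable def Etrc (W : 𝒳 → 𝒴 → ℝ) (g : (𝒳 → 𝒴 → ℝ) → ℝ) (QX : 𝒳 → ℝ)
    (R : ℝ) : EReal :=
  sInf {v : EReal | ∃ QXX' : 𝒳 → 𝒳 → ℝ, IsJointPMF QXX' ∧ margX QXX' = QX ∧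
    margY QXX' = QX ∧ mutInf QXX' ≤ 2 * R ∧
    v = Gamma W g QX R QXX' + ((mutInf QXX' : ℝ) : EReal) - ((R : ℝ) : EReal)}

/-- The single-letter expurgated exponent `E_ex^g(R, Q_X)`. -/
noncomputable def Eex (W : 𝒳 → 𝒴 → ℝ) (g : (𝒳 → 𝒴 → ℝ) → ℝ) (QX : 𝒳 → ℝ)
    (R : ℝ) : EReal :=
  sInf {v : EReal | ∃ QXX' : 𝒳 → 𝒳 → ℝ, IsJointPMF QXX' ∧ margX QXX' = QX ∧
    margY QXX' = QX ∧ mutInf QXX' ≤ R ∧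
    v = Gamma W g QX R QXX' + ((mutInf QXX' : ℝ) : EReal) - ((R : ℝ) : EReal)}

/-- `Λ(Q_{XX'})`. -/
noncomputable def Lambda (W : 𝒳 → 𝒴 → ℝ) (QXX' : 𝒳 → 𝒳 → ℝ) : EReal :=
  ⨆ μ : {μ : ℝ // 0 ≤ μ}, ⨅ Qc : {Qc : 𝒳 → 𝒳 → 𝒴 → ℝ // ∀ x x', IsPMF (Qc x x')},
    ((obj W (jointQ QXX' Qc.1) + μ.1 * (mutInf (margXY3 (jointQ QXX' Qc.1)) -
      mutInf (margX'Y3 (jointQ QXX' Qc.1))) : ℝ) : EReal)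

/-- `Φ(Q_{XX'}, R)`. -/
noncomputable def Phi (W : 𝒳 → 𝒴 → ℝ) (QXX' : 𝒳 → 𝒳 → ℝ) (R : ℝ) : EReal :=
  ⨆ μ : {μ : ℝ // 0 ≤ μ}, ⨅ Qc : {Qc : 𝒳 → 𝒳 → 𝒴 → ℝ // ∀ x x', IsPMF (Qc x x')},
    ((obj W (jointQ QXX' Qc.1) + μ.1 * (R - mutInf (margX'Y3 (jointQ QXX' Qc.1))) : ℝ) : EReal)

/-- `Ψ(Q_{XX'})`. -/
noncomputable def Psi (W : 𝒳 → 𝒴 → ℝ) (QXX' : 𝒳 → 𝒳 → ℝ) : EReal :=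
  ⨆ s : {s : ℝ // 0 ≤ s},
    ((-∑ x, ∑ x', QXX' x x' * Real.log (∑ y, W x y ^ (1 - s.1) * W x' y ^ s.1) : ℝ) : EReal)

/-- `G(y, σ, τ, V)`. -/
noncomputable def Gfun (W : 𝒳 → 𝒴 → ℝ) (QX : 𝒳 → ℝ) (y : 𝒴) (σ τ : ℝ)
    (V : 𝒳 → ℝ) : ℝ :=
  (∑ x, W x y ^ (1 / σ) * QX x ^ (τ / σ) * V x ^ (-(τ / σ))) ^ σ

/-- `Θ(Q_{XX'}, R)`. -/
noncomputable def Theta (W : 𝒳 → 𝒴 → ℝ) (QX : 𝒳 → ℝ) (QXX' : 𝒳 → 𝒳 → ℝ)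
    (R : ℝ) : EReal :=
  ⨆ ρ : {ρ : ℝ // 0 ≤ ρ}, ⨅ σ : {σ : ℝ // 0 < σ}, ⨅ τ : {τ : ℝ // 0 ≤ τ},
    ⨅ V : {V : 𝒳 → ℝ // IsPosPMF V},
    ((ρ.1 * σ.1 * (R - ent QX) - ∑ x, ∑ x', QXX' x x' *
      Real.log (∑ y, W x y * W x' y ^ ρ.1 * Gfun W QX y σ.1 τ.1 V.1 ^ (-ρ.1)) : ℝ) : EReal)

/-!
Gibbs' variational principle `max_p (E_p[log b] + H(p)) = log ∑ b` is used twice.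

Its inequality half, applied to `Q_{X̃|Y=y}` and the summands of `G(y, σ, τ, V)`, gives
`g_ML(Q) ≤ σ (R - H(Q_X)) + E_Q[log G(Y)]` whenever `I_Q(X̃;Y) ≤ R`: here `τ` only enters through
`τ D(Q_X ‖ V) ≥ 0`, and `σ` is the multiplier of the constraint `I_Q(X̃;Y) - R ≤ 0`. Hence the same
bound holds for `a_{g_ML}(R, Q_Y)`.

Substituting that bound in the objective of `Ξ` leaves a free energy in `Q_{Y|XX'}` whose minimizer
is the Gibbs distribution with weights `W(y|x) W(y|x')^ρ G(y, σ, τ, V)^{-ρ}`. By the equality half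
of the principle its value there is the objective of `Θ`.
-/

section LogSum

variable {α : Type*}

lemma mul_log_sub_log_le {p b c : ℝ} (hp : 0 ≤ p) (hb : 0 ≤ b) (hbp : b = 0 → p = 0)
    (hc : 0 < c) : p * (log b - log p) ≤ b * c - p - p * log c := by
  rcases hp.eq_or_lt with rfl | hp
  · simpa using mul_nonneg hb hc.le
  have hb : 0 < b := hb.lt_of_ne' fun h => hp.ne' (hbp h)
  have hlog : log b + log c - log p ≤ b * c / p - 1 := by
    rw [← log_mul hb.ne' hc.ne', ← log_div (by positivity) hp.ne']
    exact log_le_sub_one_of_pos (by positivity)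
  have hmul : p * (b * c / p - 1) = b * c - p := by field_simp
  linarith [mul_le_mul_of_nonneg_left hlog hp.le]

lemma sum_mul_log_sub_log_le {s : Finset α} {p b : α → ℝ} (hp : ∀ i ∈ s, 0 ≤ p i)
    (hb : ∀ i ∈ s, 0 ≤ b i) (hbp : ∀ i ∈ s, b i = 0 → p i = 0) :
    ∑ i ∈ s, p i * (log (b i) - log (p i)) ≤
      (∑ i ∈ s, p i) * (log (∑ i ∈ s, b i) - log (∑ i ∈ s, p i)) := by
  rcases (Finset.sum_nonneg hp).eq_or_lt with hP | hP
  · have hp0 := (Finset.sum_eq_zero_iff_of_nonneg hp).1 hP.symm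
    rw [← hP, zero_mul]
    exact Finset.sum_nonpos fun i hi => by simp [hp0 i hi]
  have hB : 0 < ∑ i ∈ s, b i := (Finset.sum_nonneg hb).lt_of_ne' fun h =>
    hP.ne' <| Finset.sum_eq_zero fun i hi =>
      hbp i hi <| (Finset.sum_eq_zero_iff_of_nonneg hb).1 h i hi
  set P := ∑ i ∈ s, p i
  set B := ∑ i ∈ s, b i
  -- `P / B` is the slope for which the linear terms of the tangent-line bounds cancel in the sum.
  calc ∑ i ∈ s, p i * (log (b i) - log (p i))
      ≤ ∑ i ∈ s, (b i * (P / B) - p i - p i * log (P / B)) := Finset.sum_le_sum fun i hi =>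
        mul_log_sub_log_le (hp i hi) (hb i hi) (hbp i hi) (div_pos hP hB)
    _ = B * (P / B) - P - P * log (P / B) := by
        simp only [Finset.sum_sub_distrib, ← Finset.sum_mul, P, B]
    _ = P * (log B - log P) := by
        rw [mul_div_cancel₀ P hB.ne', log_div hP.ne' hB.ne']
        ring

lemma IsPMF.exists_pos [Fintype α] {p : α → ℝ} (hp : IsPMF p) : ∃ a, 0 < p a := by
  obtain ⟨a, -, ha⟩ := Finset.exists_ne_zero_of_sum_ne_zero (hp.2.trans_ne one_ne_zero)
  exact ⟨a, (hp.1 a).lt_of_ne' ha⟩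

lemma IsPMF.sum_mul_log_le_neg_ent [Fintype α] {p q : α → ℝ} (hp : IsPMF p) (hq : IsPosPMF q) :
    ∑ a, p a * log (q a) ≤ -ent p := by
  have h := sum_mul_log_sub_log_le (s := Finset.univ) (fun a _ => hp.1 a)
    (fun a _ => (hq.1 a).le) (fun a _ h => absurd h (hq.1 a).ne')
  simp only [mul_sub, Finset.sum_sub_distrib, hp.2, hq.2, log_one] at h
  rw [ent]
  linarith

end LogSum

section Gibbs

variable {α : Type*} [Fintype α] {w : α → ℝ}

/-- The Gibbs distribution with weights `w`, i.e. the pmf proportional to `w`. It is identically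
`0` when `∑ a, w a = 0`. -/
noncomputable def gibbs (w : α → ℝ) (a : α) : ℝ := w a / ∑ a', w a'

lemma isPMF_gibbs [Nonempty α] (hw : ∀ a, 0 < w a) : IsPMF (gibbs w) := by
  have hZ : 0 < ∑ a, w a := Finset.sum_pos (fun a _ => hw a) Finset.univ_nonempty
  refine ⟨fun a => (div_pos (hw a) hZ).le, ?_⟩
  simp only [gibbs, ← Finset.sum_div, div_self hZ.ne']

lemma ent_gibbs [Nonempty α] (hw : ∀ a, 0 < w a) :
    ent (gibbs w) = log (∑ a, w a) - ∑ a, gibbs w a * log (w a) := by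
  have hZ : 0 < ∑ a, w a := Finset.sum_pos (fun a _ => hw a) Finset.univ_nonempty
  have hlog (a : α) : log (gibbs w a) = log (w a) - log (∑ a', w a') :=
    log_div (hw a).ne' hZ.ne'
  simp only [ent, hlog, mul_sub, Finset.sum_sub_distrib, ← Finset.sum_mul,
    (isPMF_gibbs hw).2]
  ring

end Gibbs

section Marginals

variable {𝒳 𝒴 : Type*} {Q : 𝒳 → 𝒴 → ℝ}

lemma margX_ne_zero [Fintype 𝒴] (hQ : ∀ x y, 0 ≤ Q x y) {x : 𝒳} {y : 𝒴} (h : Q x y ≠ 0) :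
    margX Q x ≠ 0 := fun h0 =>
  h <| (Finset.sum_eq_zero_iff_of_nonneg fun y _ => hQ x y).1 h0 y (Finset.mem_univ y)

lemma margY_ne_zero [Fintype 𝒳] (hQ : ∀ x y, 0 ≤ Q x y) {x : 𝒳} {y : 𝒴} (h : Q x y ≠ 0) :
    margY Q y ≠ 0 := fun h0 =>
  h <| (Finset.sum_eq_zero_iff_of_nonneg fun x _ => hQ x y).1 h0 x (Finset.mem_univ x)

lemma margX_mul [Fintype 𝒴] (p : 𝒳 → ℝ) {q : 𝒴 → ℝ} (hq : IsPMF q) :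
    margX (fun x y => p x * q y) = p := by
  funext x
  simp only [margX, ← Finset.mul_sum, hq.2, mul_one]

lemma margY_mul [Fintype 𝒳] {p : 𝒳 → ℝ} (hp : IsPMF p) (q : 𝒴 → ℝ) :
    margY (fun x y => p x * q y) = q := by
  funext y
  simp only [margY, ← Finset.sum_mul, hp.2, one_mul]

end Marginals

section JointPMF

variable {Q : 𝒳 → 𝒴 → ℝ}

lemma sum_mul_margX (Q : 𝒳 → 𝒴 → ℝ) (f : 𝒳 → ℝ) :
    ∑ x, ∑ y, Q x y * f x = ∑ x, margX Q x * f x := by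
  simp only [margX, Finset.sum_mul]

lemma sum_mul_margY (Q : 𝒳 → 𝒴 → ℝ) (f : 𝒴 → ℝ) :
    ∑ x, ∑ y, Q x y * f y = ∑ y, margY Q y * f y := by
  simp only [margY, Finset.sum_mul]
  exact Finset.sum_comm

lemma isPMF_margX (hQ : IsJointPMF Q) : IsPMF (margX Q) :=
  ⟨fun x => Finset.sum_nonneg fun y _ => hQ.1 x y, hQ.2⟩

lemma mutInf_eq_ent_sub_condEntXY (hQ : ∀ x y, 0 ≤ Q x y) :
    mutInf Q = ent (margX Q) - condEntXY Q := by
  have hlog (x : 𝒳) (y : 𝒴) : Q x y * log (Q x y / (margX Q x * margY Q y)) =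
      Q x y * log (Q x y / margY Q y) - Q x y * log (margX Q x) := by
    rcases eq_or_ne (Q x y) 0 with h | h
    · simp [h]
    · rw [div_mul_eq_div_div_swap, log_div (div_ne_zero h (margY_ne_zero hQ h))
        (margX_ne_zero hQ h), mul_sub]
  simp only [mutInf, hlog, Finset.sum_sub_distrib, sum_mul_margX, ent, condEntXY]
  ring

lemma sum_mul_log_add_condEntXY_le {b : 𝒳 → 𝒴 → ℝ} (hQ : ∀ x y, 0 ≤ Q x y)
    (hb : ∀ x y, 0 ≤ b x y) (hbQ : ∀ x y, b x y = 0 → Q x y = 0) :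
    ∑ x, ∑ y, Q x y * log (b x y) + condEntXY Q ≤ ∑ y, margY Q y * log (∑ x, b x y) := by
  have hlog (x : 𝒳) (y : 𝒴) : Q x y * log (Q x y / margY Q y) =
      Q x y * log (Q x y) - Q x y * log (margY Q y) := by
    rcases eq_or_ne (Q x y) 0 with h | h
    · simp [h]
    · rw [log_div h (margY_ne_zero hQ h), mul_sub]
  have hlogsum (y : 𝒴) : ∑ x, Q x y * (log (b x y) - log (Q x y)) ≤
      margY Q y * (log (∑ x, b x y) - log (margY Q y)) :=
    sum_mul_log_sub_log_le (fun x _ => hQ x y) (fun x _ => hb x y) fun x _ => hbQ x y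
  have hsum := Finset.sum_le_sum fun y (_ : y ∈ Finset.univ) => hlogsum y
  rw [Finset.sum_comm] at hsum
  simp only [mul_sub, Finset.sum_sub_distrib] at hsum
  simp only [condEntXY, hlog, Finset.sum_sub_distrib, sum_mul_margY]
  linarith

end JointPMF

section ProductPMF

variable {p : 𝒳 → ℝ} {q : 𝒴 → ℝ}

lemma isJointPMF_mul (hp : IsPMF p) (hq : IsPMF q) : IsJointPMF fun x y => p x * q y :=
  ⟨fun x y => mul_nonneg (hp.1 x) (hq.1 y), by simp only [← Finset.mul_sum, hq.2, mul_one, hp.2]⟩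

lemma mutInf_mul (hp : IsPMF p) (hq : IsPMF q) : mutInf (fun x y => p x * q y) = 0 := by
  rw [mutInf, margX_mul p hq, margY_mul hp q]
  refine Finset.sum_eq_zero fun x _ => Finset.sum_eq_zero fun y _ => ?_
  rcases eq_or_ne (p x * q y) 0 with h | h
  · rw [h, zero_mul]
  · rw [div_self h, log_one, mul_zero]

end ProductPMF

section GibbsWeight

variable {𝒳 𝒴 : Type*} {W : 𝒳 → 𝒴 → ℝ} {QX V : 𝒳 → ℝ} {σ τ : ℝ}

/-- The summand `W(y|x)^{1/σ} Q_X(x)^{τ/σ} V(x)^{-τ/σ}` of `Gfun`, viewed as an ungibbsd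
Gibbs weight on `x` given `y`. -/
noncomputable def gWeight (W : 𝒳 → 𝒴 → ℝ) (QX : 𝒳 → ℝ) (σ τ : ℝ) (V : 𝒳 → ℝ) (x : 𝒳)
    (y : 𝒴) : ℝ :=
  W x y ^ (1 / σ) * QX x ^ (τ / σ) * V x ^ (-(τ / σ))

lemma gWeight_nonneg (hW : ∀ x y, 0 < W x y) (hQX : ∀ x, 0 ≤ QX x) (hV : ∀ x, 0 < V x) (x : 𝒳)
    (y : 𝒴) : 0 ≤ gWeight W QX σ τ V x y :=
  mul_nonneg (mul_nonneg (rpow_nonneg (hW x y).le _) (rpow_nonneg (hQX x) _))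
    (rpow_nonneg (hV x).le _)

lemma gWeight_pos (hW : ∀ x y, 0 < W x y) (hV : ∀ x, 0 < V x) {x : 𝒳} (hx : 0 < QX x) (y : 𝒴) :
    0 < gWeight W QX σ τ V x y :=
  mul_pos (mul_pos (rpow_pos_of_pos (hW x y) _) (rpow_pos_of_pos hx _))
    (rpow_pos_of_pos (hV x) _)

lemma mul_log_gWeight (hW : ∀ x y, 0 < W x y) (hV : ∀ x, 0 < V x) (hσ : σ ≠ 0) {x : 𝒳}
    (hx : 0 < QX x) (y : 𝒴) :
    σ * log (gWeight W QX σ τ V x y) = log (W x y) + τ * (log (QX x) - log (V x)) := by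
  have hWσ := rpow_pos_of_pos (hW x y) (1 / σ)
  have hQσ := rpow_pos_of_pos hx (τ / σ)
  rw [gWeight, log_mul (mul_pos hWσ hQσ).ne' (rpow_pos_of_pos (hV x) _).ne',
    log_mul hWσ.ne' hQσ.ne', log_rpow (hW x y), log_rpow hx, log_rpow (hV x)]
  field_simp
  ring

variable [Fintype 𝒳]

lemma sum_gWeight_pos (hW : ∀ x y, 0 < W x y) (hQX : IsPMF QX) (hV : ∀ x, 0 < V x) (y : 𝒴) :
    0 < ∑ x, gWeight W QX σ τ V x y :=
  let ⟨x, hx⟩ := hQX.exists_pos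
  Finset.sum_pos' (fun x _ => gWeight_nonneg hW hQX.1 hV x y)
    ⟨x, Finset.mem_univ x, gWeight_pos hW hV hx y⟩

lemma Gfun_pos (hW : ∀ x y, 0 < W x y) (hQX : IsPMF QX) (hV : ∀ x, 0 < V x) (y : 𝒴) :
    0 < Gfun W QX y σ τ V :=
  rpow_pos_of_pos (sum_gWeight_pos hW hQX hV y) σ

lemma log_Gfun (hW : ∀ x y, 0 < W x y) (hQX : IsPMF QX) (hV : ∀ x, 0 < V x) (y : 𝒴) :
    log (Gfun W QX y σ τ V) = σ * log (∑ x, gWeight W QX σ τ V x y) :=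
  log_rpow (sum_gWeight_pos hW hQX hV y) σ

end GibbsWeight

section MLBound

variable {W Q : 𝒳 → 𝒴 → ℝ} {QX V : 𝒳 → ℝ} {σ τ R : ℝ}

lemma gML_le_mul_sum_log_gWeight (hW : ∀ x y, 0 < W x y) (hV : IsPosPMF V) (hσ : σ ≠ 0)
    (hτ : 0 ≤ τ) (hQ : IsJointPMF Q) :
    gML W Q ≤ σ * ∑ x, ∑ y, Q x y * log (gWeight W (margX Q) σ τ V x y) := by
  have hQX := isPMF_margX hQ
  have hlog (x : 𝒳) (y : 𝒴) : σ * (Q x y * log (gWeight W (margX Q) σ τ V x y)) =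
      Q x y * log (W x y) + τ * (Q x y * log (margX Q x) - Q x y * log (V x)) := by
    rcases eq_or_ne (Q x y) 0 with h | h
    · simp [h]
    · have hx : 0 < margX Q x := (hQX.1 x).lt_of_ne' (margX_ne_zero hQ.1 h)
      linear_combination Q x y * mul_log_gWeight (τ := τ) hW hV.1 hσ hx y
  have hdiv : 0 ≤ -ent (margX Q) - ∑ x, margX Q x * log (V x) :=
    sub_nonneg.2 (hQX.sum_mul_log_le_neg_ent hV)
  calc gML W Q ≤ gML W Q + τ * (-ent (margX Q) - ∑ x, margX Q x * log (V x)) :=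
        le_add_of_nonneg_right (mul_nonneg hτ hdiv)
    _ = σ * ∑ x, ∑ y, Q x y * log (gWeight W (margX Q) σ τ V x y) := by
        simp only [Finset.mul_sum, hlog]
        simp only [Finset.sum_add_distrib, ← Finset.mul_sum, Finset.sum_sub_distrib,
          sum_mul_margX, gML, ent, neg_neg]

lemma gML_le_of_mutInf_le (hW : ∀ x y, 0 < W x y) (hV : IsPosPMF V) (hσ : 0 < σ) (hτ : 0 ≤ τ)
    (hQ : IsJointPMF Q) (hI : mutInf Q ≤ R) :
    gML W Q ≤ σ * (R - ent (margX Q)) +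
      ∑ y, margY Q y * log (Gfun W (margX Q) y σ τ V) := by
  have hQX := isPMF_margX hQ
  have hgibbs := sum_mul_log_add_condEntXY_le hQ.1
    (gWeight_nonneg (σ := σ) (τ := τ) hW hQX.1 hV.1) fun x y h => by
      by_contra hxy
      exact (gWeight_pos hW hV.1 ((hQX.1 x).lt_of_ne' (margX_ne_zero hQ.1 hxy)) y).ne' h
  rw [mutInf_eq_ent_sub_condEntXY hQ.1] at hI
  calc gML W Q ≤ σ * ∑ x, ∑ y, Q x y * log (gWeight W (margX Q) σ τ V x y) :=
        gML_le_mul_sum_log_gWeight hW hV hσ.ne' hτ hQ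
    _ ≤ σ * (R - ent (margX Q) +
          ∑ y, margY Q y * log (∑ x, gWeight W (margX Q) σ τ V x y)) :=
        mul_le_mul_of_nonneg_left (by linarith) hσ.le
    _ = σ * (R - ent (margX Q)) + ∑ y, margY Q y * log (Gfun W (margX Q) y σ τ V) := by
        simp only [log_Gfun hW hQX hV.1, mul_add, Finset.mul_sum, mul_left_comm σ]

lemma aFun_gML_le (hW : ∀ x y, 0 < W x y) (hQX : IsPMF QX) (hV : IsPosPMF V) (hσ : 0 < σ)
    (hτ : 0 ≤ τ) (hR : 0 ≤ R) {QY : 𝒴 → ℝ} (hQY : IsPMF QY) :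
    aFun (gML W) QX R QY ≤
      σ * (R - ent QX) + ∑ y, QY y * log (Gfun W QX y σ τ V) := by
  refine csSup_le ?_ ?_
  · exact ⟨_, fun x y => QX x * QY y, isJointPMF_mul hQX hQY, margX_mul QX hQY,
      margY_mul hQX QY, (mutInf_mul hQX hQY).trans_le hR, rfl⟩
  · rintro _ ⟨Q, hQ, rfl, rfl, hI, rfl⟩
    exact gML_le_of_mutInf_le hW hV hσ hτ hQ hI

end MLBound

section TripleJointPMF

lemma sum_jointQ {𝒳 : Type*} {QXX' : 𝒳 → 𝒳 → ℝ} {Qc : 𝒳 → 𝒳 → 𝒴 → ℝ}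
    (hQc : ∀ x x', IsPMF (Qc x x')) (x x' : 𝒳) : ∑ y, jointQ QXX' Qc x x' y = QXX' x x' := by
  simp only [jointQ, ← Finset.mul_sum, (hQc x x').2, mul_one]

lemma sum_mul_margY3 (Q : 𝒳 → 𝒳 → 𝒴 → ℝ) (f : 𝒴 → ℝ) :
    ∑ x, ∑ x', ∑ y, Q x x' y * f y = ∑ y, margY3 Q y * f y := by
  simp only [margY3, Finset.sum_mul]
  exact Finset.sum_comm_cycle

lemma gML_margX'Y3 (W : 𝒳 → 𝒴 → ℝ) (Q : 𝒳 → 𝒳 → 𝒴 → ℝ) :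
    gML W (margX'Y3 Q) = ∑ x, ∑ x', ∑ y, Q x x' y * log (W x' y) := by
  simp only [gML, margX'Y3, Finset.sum_mul]
  rw [Finset.sum_comm_cycle, Finset.sum_comm]

lemma isPMF_margY3 {Q : 𝒳 → 𝒳 → 𝒴 → ℝ} (hQ : IsJointPMF3 Q) : IsPMF (margY3 Q) :=
  ⟨fun y => Finset.sum_nonneg fun x _ => Finset.sum_nonneg fun x' _ => hQ.1 x x' y,
    by simpa only [mul_one, hQ.2] using (sum_mul_margY3 Q fun _ => 1).symm⟩

variable {QXX' : 𝒳 → 𝒳 → ℝ} {Qc : 𝒳 → 𝒳 → 𝒴 → ℝ}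

lemma isJointPMF3_jointQ (hQ : IsJointPMF QXX') (hQc : ∀ x x', IsPMF (Qc x x')) :
    IsJointPMF3 (jointQ QXX' Qc) :=
  ⟨fun x x' y => mul_nonneg (hQ.1 x x') ((hQc x x').1 y), by simp only [sum_jointQ hQc, hQ.2]⟩

lemma condEntY3_jointQ (hQc : ∀ x x', IsPMF (Qc x x')) :
    condEntY3 (jointQ QXX' Qc) = ∑ x, ∑ x', QXX' x x' * ent (Qc x x') := by
  simp only [condEntY3, sum_jointQ hQc, ← Finset.sum_neg_distrib]
  refine Finset.sum_congr rfl fun x _ => Finset.sum_congr rfl fun x' _ => ?_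
  rw [Finset.sum_neg_distrib, ent, mul_neg, Finset.mul_sum]
  congr 1
  refine Finset.sum_congr rfl fun y _ => ?_
  rcases eq_or_ne (QXX' x x') 0 with h | h
  · simp [jointQ, h]
  · rw [jointQ, mul_div_cancel_left₀ _ h, mul_assoc]

lemma condEntY3_jointQ_gibbs [Nonempty 𝒴] {w : 𝒳 → 𝒳 → 𝒴 → ℝ}
    (hw : ∀ x x' y, 0 < w x x' y) (QXX' : 𝒳 → 𝒳 → ℝ) :
    condEntY3 (jointQ QXX' fun x x' => gibbs (w x x')) =
      ∑ x, ∑ x', QXX' x x' * log (∑ y, w x x' y) -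
        ∑ x, ∑ x', ∑ y,
          jointQ QXX' (fun x x' => gibbs (w x x')) x x' y * log (w x x' y) := by
  rw [condEntY3_jointQ fun x x' => isPMF_gibbs (hw x x')]
  simp only [ent_gibbs (hw _ _), mul_sub, Finset.sum_sub_distrib, Finset.mul_sum, jointQ,
    mul_assoc]

end TripleJointPMF

section TiltedChannel

variable {𝒳 𝒴 : Type*} {W : 𝒳 → 𝒴 → ℝ} {G : 𝒴 → ℝ}

/-- The weight `W(y|x) W(y|x')^ρ G(y)^{-ρ}` of which `Theta` takes the log-partition function, with
`G` the function `Gfun W QX · σ τ V`. -/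
noncomputable def tiltWeight (W : 𝒳 → 𝒴 → ℝ) (ρ : ℝ) (G : 𝒴 → ℝ) (x x' : 𝒳) (y : 𝒴) : ℝ :=
  W x y * W x' y ^ ρ * G y ^ (-ρ)

lemma tiltWeight_pos (hW : ∀ x y, 0 < W x y) (hG : ∀ y, 0 < G y) (ρ : ℝ) (x x' : 𝒳) (y : 𝒴) :
    0 < tiltWeight W ρ G x x' y :=
  mul_pos (mul_pos (hW x y) (rpow_pos_of_pos (hW x' y) ρ)) (rpow_pos_of_pos (hG y) (-ρ))

lemma log_tiltWeight (hW : ∀ x y, 0 < W x y) (hG : ∀ y, 0 < G y) (ρ : ℝ) (x x' : 𝒳) (y : 𝒴) :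
    log (tiltWeight W ρ G x x' y) = log (W x y) + ρ * log (W x' y) - ρ * log (G y) := by
  have hWρ := rpow_pos_of_pos (hW x' y) ρ
  rw [tiltWeight, log_mul (mul_pos (hW x y) hWρ).ne' (rpow_pos_of_pos (hG y) _).ne',
    log_mul (hW x y).ne' hWρ.ne', log_rpow (hW x' y), log_rpow (hG y)]
  ring

variable [Fintype 𝒴]

/-- The conditional pmf `Q_{Y|XX'}` proportional to `tiltWeight`, which minimizes the free energy
in the proof of `Ξ ≤ Θ`. -/
noncomputable def tiltedChannel (W : 𝒳 → 𝒴 → ℝ) (ρ : ℝ) (G : 𝒴 → ℝ) (x x' : 𝒳) : 𝒴 → ℝ :=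
  gibbs (tiltWeight W ρ G x x')

lemma isPMF_tiltedChannel [Nonempty 𝒴] (hW : ∀ x y, 0 < W x y) (hG : ∀ y, 0 < G y) (ρ : ℝ)
    (x x' : 𝒳) : IsPMF (tiltedChannel W ρ G x x') :=
  isPMF_gibbs (tiltWeight_pos hW hG ρ x x')

end TiltedChannel

lemma obj_jointQ_tiltedChannel [Nonempty 𝒴] {W : 𝒳 → 𝒴 → ℝ} {G : 𝒴 → ℝ}
    (hW : ∀ x y, 0 < W x y) (hG : ∀ y, 0 < G y) (ρ : ℝ) (QXX' : 𝒳 → 𝒳 → ℝ) :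
    obj W (jointQ QXX' (tiltedChannel W ρ G)) =
      ρ * (gML W (margX'Y3 (jointQ QXX' (tiltedChannel W ρ G))) -
        ∑ y, margY3 (jointQ QXX' (tiltedChannel W ρ G)) y * log (G y)) -
      ∑ x, ∑ x', QXX' x x' * log (∑ y, tiltWeight W ρ G x x' y) := by
  have hent : condEntY3 (jointQ QXX' (tiltedChannel W ρ G)) =
      ∑ x, ∑ x', QXX' x x' * log (∑ y, tiltWeight W ρ G x x' y) -
        ∑ x, ∑ x', ∑ y,
          jointQ QXX' (tiltedChannel W ρ G) x x' y * log (tiltWeight W ρ G x x' y) :=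
    condEntY3_jointQ_gibbs (tiltWeight_pos hW hG ρ) QXX'
  simp only [log_tiltWeight hW hG, mul_sub, mul_add, mul_left_comm _ ρ, Finset.sum_sub_distrib,
    Finset.sum_add_distrib, ← Finset.mul_sum, sum_mul_margY3, ← gML_margX'Y3] at hent
  rw [obj, hent]
  ring

theorem Xi_le_Theta_general [Nonempty 𝒴] (W : 𝒳 → 𝒴 → ℝ) (hW : ∀ x y, 0 < W x y)
    (QX : 𝒳 → ℝ) (hQX : IsPMF QX) (R : ℝ) (hR : 0 ≤ R)
    (QXX' : 𝒳 → 𝒳 → ℝ) (hQ : IsJointPMF QXX') :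
    (⨆ ρ : {ρ : ℝ // 0 ≤ ρ},
        ⨅ Qc : {Qc : 𝒳 → 𝒳 → 𝒴 → ℝ // ∀ x x', IsPMF (Qc x x')},
          ((obj W (jointQ QXX' Qc.1)
            + ρ.1 * (aFun (gML W) QX R (margY3 (jointQ QXX' Qc.1))
              - gML W (margX'Y3 (jointQ QXX' Qc.1))) : ℝ) : EReal))
      ≤ Theta W QX QXX' R := by
  refine iSup_mono fun ⟨ρ, hρ⟩ => le_iInf fun ⟨σ, hσ⟩ => le_iInf fun ⟨τ, hτ⟩ =>
    le_iInf fun ⟨V, hV⟩ => ?_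
  let G (y : 𝒴) : ℝ := Gfun W QX y σ τ V
  have hG (y : 𝒴) : 0 < G y := Gfun_pos hW hQX hV.1 y
  have hQc := isPMF_tiltedChannel hW hG ρ
  refine iInf_le_of_le ⟨tiltedChannel W ρ G, hQc⟩ (EReal.coe_le_coe_iff.2 ?_)
  let J := jointQ QXX' (tiltedChannel W ρ G)
  have ha : aFun (gML W) QX R (margY3 J) ≤ σ * (R - ent QX) + ∑ y, margY3 J y * log (G y) :=
    aFun_gML_le hW hQX hV hσ hτ hR (isPMF_margY3 (isJointPMF3_jointQ hQ hQc))
  calc obj W J + ρ * (aFun (gML W) QX R (margY3 J) - gML W (margX'Y3 J))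
      ≤ obj W J + ρ * (σ * (R - ent QX) + ∑ y, margY3 J y * log (G y)
          - gML W (margX'Y3 J)) := by gcongr
    _ = ρ * σ * (R - ent QX)
          - ∑ x, ∑ x', QXX' x x' * log (∑ y, tiltWeight W ρ G x x' y) := by
        linear_combination obj_jointQ_tiltedChannel hW hG ρ QXX'

/-- **Appendix A, concluding chain:** `Ξ(Q_{XX'},R) ≤ Θ(Q_{XX'},R)`. -/
theorem Xi_le_Theta {𝒳 𝒴 : Type*} [Fintype 𝒳] [Fintype 𝒴]
    [Nonempty 𝒳] [Nonempty 𝒴]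
    (W : 𝒳 → 𝒴 → ℝ) (hW : IsChannel W)
    (QX : 𝒳 → ℝ) (hQX : IsPMF QX) (R : ℝ) (hR : 0 ≤ R)
    (QXX' : 𝒳 → 𝒳 → ℝ) (hQ : IsJointPMF QXX') :
    (⨆ ρ : {ρ : ℝ // 0 ≤ ρ},
        ⨅ Qc : {Qc : 𝒳 → 𝒳 → 𝒴 → ℝ // ∀ x x', IsPMF (Qc x x')},
          ((obj W (jointQ QXX' Qc.1)
            + ρ.1 * (aFun (gML W) QX R (margY3 (jointQ QXX' Qc.1))
              - gML W (margX'Y3 (jointQ QXX' Qc.1))) : ℝ) : EReal))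
      ≤ Theta W QX QXX' R :=
  Xi_le_Theta_general W (fun x => (hW x).1) QX hQX R hR QXX' hQ

end EE
end

section
/- (Appendix C, inner maximization, eqs. (C.27)–(C.37)) Let B be a nonempty finite set, let w be a strictly positive pmf on B, and let p ∈ (0,1). Then the maximum over pmfs v on B of ∑_{y} ( v(y)/w(y) )^{p} equals ( ∑_{y} w(y)^{p/(p−1)} )^{1−p}, and it is attained at v(y) = w(y)^{p/(p−1)} / ∑_{y'} w(y')^{p/(p−1)}. -/
open Real BigOperators Filter

namespace EE

variable {𝒳 𝒴 : Type*} [Fintype 𝒳] [Fintype 𝒴]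

/-!
With `r = p / (p - 1)`, Hölder's inequality for the triple `1 + 1 / (-r) = 1 / p`, applied to the
factors `q` and `w⁻¹`, gives `∑ (q / w) ^ p ≤ (∑ q) ^ p * (∑ w ^ r) ^ (1 - p)`. Equality is
attained at `q` proportional to `w ^ r`: since `(r - 1) * p = r`, the terms `(w ^ r / w) ^ p` are
again `w ^ r`, and the objective collapses to a power of `∑ w ^ r`.
-/

/-- The escort distribution of order `r` of a weight function `w`, i.e. `w ^ r` normalized to total
mass one. Its instance `r = p / (p - 1)` is the maximizer. -/
noncomputable def escort {α : Type*} [Fintype α] (w : α → ℝ) (r : ℝ) (a : α) : ℝ :=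
  w a ^ r / ∑ a', w a' ^ r

theorem isPMF_escort {α : Type*} [Fintype α] [Nonempty α] {w : α → ℝ} (hw : ∀ a, 0 < w a)
    (r : ℝ) : IsPMF (escort w r) := by
  have hsum : 0 < ∑ a, w a ^ r :=
    Finset.sum_pos (fun a _ => rpow_pos_of_pos (hw a) r) Finset.univ_nonempty
  refine ⟨fun a => div_nonneg (rpow_nonneg (hw a).le r) hsum.le, ?_⟩
  simp only [escort]
  rw [← Finset.sum_div, div_self hsum.ne']

theorem rpow_conjExponent_div_self_rpow {x p : ℝ} (hx : 0 < x) (hp : p ≠ 1) :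
    (x ^ (p / (p - 1)) / x) ^ p = x ^ (p / (p - 1)) := by
  have hexp : (p / (p - 1) - 1) * p = p / (p - 1) := by
    have := sub_ne_zero.mpr hp
    field_simp
    ring
  rw [← rpow_sub_one hx.ne', ← rpow_mul hx.le, hexp]

theorem sum_escort_conjExponent_div_rpow {α : Type*} [Fintype α] {w : α → ℝ}
    (hw : ∀ a, 0 < w a) {p : ℝ} (hp : p ≠ 1) :
    ∑ a, (escort w (p / (p - 1)) a / w a) ^ p = (∑ a, w a ^ (p / (p - 1))) ^ (1 - p) := by
  have hpow_nonneg (a : α) : 0 ≤ w a ^ (p / (p - 1)) := rpow_nonneg (hw a).le _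
  set S := ∑ a, w a ^ (p / (p - 1)) with hS
  have hS_nonneg : 0 ≤ S := Finset.sum_nonneg fun a _ => hpow_nonneg a
  calc ∑ a, (escort w (p / (p - 1)) a / w a) ^ p
      = ∑ a, w a ^ (p / (p - 1)) / S ^ p := Finset.sum_congr rfl fun a _ => by
        rw [escort, ← hS, div_right_comm, div_rpow (div_nonneg (hpow_nonneg a) (hw a).le) hS_nonneg,
          rpow_conjExponent_div_self_rpow (hw a) hp]
    _ = S / S ^ p := (Finset.sum_div ..).symm
    _ = S ^ (1 - p) := by rw [rpow_sub' hS_nonneg (sub_ne_zero.mpr hp.symm), rpow_one]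

theorem holderTriple_one_div_one_sub {p : ℝ} (hp0 : 0 < p) (hp1 : p < 1) :
    HolderTriple 1 (p / (1 - p)) p where
  inv_add_inv_eq_inv := by
    field_simp
    ring
  left_pos := one_pos
  right_pos := div_pos hp0 (sub_pos.mpr hp1)

theorem sum_div_rpow_le {ι : Type*} (s : Finset ι) {f w : ι → ℝ} {p : ℝ}
    (hf : ∀ i ∈ s, 0 ≤ f i) (hw : ∀ i ∈ s, 0 ≤ w i) (hp0 : 0 < p) (hp1 : p < 1) :
    ∑ i ∈ s, (f i / w i) ^ p ≤
      (∑ i ∈ s, f i) ^ p * (∑ i ∈ s, w i ^ (p / (p - 1))) ^ (1 - p) := by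
  have holder := Lr_rpow_le_Lp_mul_Lq_of_nonneg s (holderTriple_one_div_one_sub hp0 hp1) hf
    fun i hi => inv_nonneg.mpr (hw i hi)
  have hpow : ∑ i ∈ s, (w i)⁻¹ ^ (p / (1 - p)) = ∑ i ∈ s, w i ^ (p / (p - 1)) :=
    Finset.sum_congr rfl fun i hi => by
      rw [inv_rpow (hw i hi), ← rpow_neg (hw i hi), ← div_neg, neg_sub]
  simpa only [← div_eq_mul_inv, rpow_one, div_one, div_div_cancel₀ hp0.ne', hpow] using holder

theorem inner_maximization_general {B : Type*} [Fintype B] [Nonempty B]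
    (w : B → ℝ) (hw : ∀ y, 0 < w y) (p : ℝ) (hp0 : 0 < p) (hp1 : p < 1) :
    IsGreatest {u : ℝ | ∃ q : B → ℝ, IsPMF q ∧ u = ∑ y, (q y / w y) ^ p}
      ((∑ y, w y ^ (p / (p - 1))) ^ (1 - p)) ∧
    IsPMF (escort w (p / (p - 1))) ∧
    ∑ y, (escort w (p / (p - 1)) y / w y) ^ p = (∑ y, w y ^ (p / (p - 1))) ^ (1 - p) := by
  have hpmf := isPMF_escort hw (p / (p - 1))
  have hval := sum_escort_conjExponent_div_rpow hw hp1.ne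
  refine ⟨⟨⟨_, hpmf, hval.symm⟩, ?_⟩, hpmf, hval⟩
  rintro _ ⟨q, ⟨hq_nonneg, hq_sum⟩, rfl⟩
  simpa only [hq_sum, one_rpow, one_mul] using
    sum_div_rpow_le Finset.univ (fun y _ => hq_nonneg y) (fun y _ => (hw y).le) hp0 hp1

/-- **Appendix C, inner maximization (eqs. (C.27)–(C.37)):** for `p ∈ (0,1)`, the maximum
over pmfs `v` of `∑_y (v(y)/w(y))^p` is `(∑_y w(y)^{p/(p−1)})^{1−p}`, attained at
`v(y) = w(y)^{p/(p−1)} / ∑_{y'} w(y')^{p/(p−1)}`. -/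
theorem inner_maximization {B : Type*} [Fintype B] [Nonempty B]
    (w : B → ℝ) (hw : IsPosPMF w) (p : ℝ) (hp0 : 0 < p) (hp1 : p < 1) :
    IsGreatest {u : ℝ | ∃ q : B → ℝ, IsPMF q ∧ u = ∑ y, (q y / w y) ^ p}
      ((∑ y, w y ^ (p / (p - 1))) ^ (1 - p)) ∧
    IsPMF (fun y => w y ^ (p / (p - 1)) / ∑ y', w y' ^ (p / (p - 1))) ∧
    ∑ y, ((w y ^ (p / (p - 1)) / ∑ y', w y' ^ (p / (p - 1))) / w y) ^ p
      = (∑ y, w y ^ (p / (p - 1))) ^ (1 - p) :=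
  inner_maximization_general w hw.1 p hp0 hp1

end EE
end
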